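/- arXiv:2312.07714 — 11 statements merged into one kernel-verified Lean document; each statement's English description precedes it below -/
import Mathlib

section
/- Let Y be a real vector space and ≺ a compatible partial preference on Y with positive cone P_≺. Then every equivalence class E of the relation ≖ on P_≺ (i.e. every open component of P_≺) is a convex cone which is relatively algebraic open, i.e. E = icr E. -/
open Pointwise

variable {Y : Type*} [AddCommGroup Y] [Module ℝ Y]

/-- The positive cone of a binary relation: `{y | 0 ≺ y}`. -/
def posCone (r : Y → Y → Prop) : Set Y := {y | r 0 y}

/-- A compatible partial preference: a binary relation compatible with the algebraic
operations which is asymmetric and transitive. -/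
structure IsCompatiblePartialPreference (r : Y → Y → Prop) : Prop where
  smul_compat : ∀ ⦃y₁ y₂ : Y⦄ ⦃l : ℝ⦄, 0 < l → r y₁ y₂ → r (l • y₁) (l • y₂)
  add_compat : ∀ ⦃y₁ y₂ : Y⦄ (y : Y), r y₁ y₂ → r (y₁ + y) (y₂ + y)
  asymm : ∀ ⦃y₁ y₂ : Y⦄, r y₁ y₂ → ¬ r y₂ y₁
  trans : ∀ ⦃y₁ y₂ y₃ : Y⦄, r y₁ y₂ → r y₂ y₃ → r y₁ y₃

/-- A compatible weak preference: a compatible partial preference whose indifference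
relation (`y ≍ z` iff neither `y ≺ z` nor `z ≺ y`) is transitive. -/
structure IsCompatibleWeakPreference (r : Y → Y → Prop)
    extends IsCompatiblePartialPreference r : Prop where
  indiff_trans : ∀ ⦃y z u : Y⦄, ¬ r y z → ¬ r z y → ¬ r z u → ¬ r u z → ¬ r y u ∧ ¬ r u y

/-- The majorization relation on the positive cone: `y ⊴ z` iff `μ • y ≺ z` for some `μ > 0`. -/
def maj (r : Y → Y → Prop) (y z : Y) : Prop := ∃ μ : ℝ, 0 < μ ∧ r (μ • y) z

/-- The equivalence `y ≖ z` : `y ⊴ z` and `z ⊴ y`. -/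
def majEquiv (r : Y → Y → Prop) (y z : Y) : Prop := maj r y z ∧ maj r z y

/-- The `≖`-equivalence class of `y` inside the positive cone. -/
def componentOf (r : Y → Y → Prop) (y : Y) : Set Y := {z ∈ posCone r | majEquiv r z y}

/-- Open components of the positive cone: the equivalence classes of `≖`. -/
def IsOpenComponent (r : Y → Y → Prop) (E : Set Y) : Prop :=
  ∃ y ∈ posCone r, E = componentOf r y

/-- The order `⊴*` on open components: `E₁ ⊴* E₂` iff `y₁ ⊴ y₂` for all `y₁ ∈ E₁`, `y₂ ∈ E₂`. -/
def compLE (r : Y → Y → Prop) (E₁ E₂ : Set Y) : Prop :=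
  ∀ y₁ ∈ E₁, ∀ y₂ ∈ E₂, maj r y₁ y₂

/-- The relative algebraic interior (intrinsic core) of a (convex) set. -/
def icr (Q : Set Y) : Set Y :=
  {z ∈ Q | ∀ y ∈ Q, ∃ δ : ℝ, 0 < δ ∧ ∀ t : ℝ, -δ < t → t < δ → z + t • (y - z) ∈ Q}

/-- The algebraic interior (core) of a set. -/
def algCr (Q : Set Y) : Set Y :=
  {z ∈ Q | ∀ y : Y, ∃ δ : ℝ, 0 < δ ∧ ∀ t : ℝ, -δ < t → t < δ → z + t • (y - z) ∈ Q}

/-- The vector space associated with a convex cone `K`: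
`L_K = {h | y + t•h ∈ K for all y ∈ K, t ∈ ℝ}`. -/
def assocSubspace (K : Set Y) : Set Y := {h | ∀ y ∈ K, ∀ t : ℝ, y + t • h ∈ K}

/-- A cone: a set closed under multiplication by positive reals. -/
def IsConeSet (K : Set Y) : Prop := ∀ y ∈ K, ∀ l : ℝ, 0 < l → l • y ∈ K

/-- A face of a convex set `Q`: a nonempty convex subset `F ⊆ Q` such that whenever a point
`α•u + (1-α)•v` (with `u, v ∈ Q`, `0 < α < 1`) lies in `F`, both `u` and `v` lie in `F`. -/
def IsFaceOf (Q F : Set Y) : Prop :=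
  F.Nonempty ∧ Convex ℝ F ∧ F ⊆ Q ∧
    ∀ u ∈ Q, ∀ v ∈ Q, ∀ α : ℝ, 0 < α → α < 1 → α • u + (1 - α) • v ∈ F → u ∈ F ∧ v ∈ F

/-- `F_y`: the members of the family `F` not vanishing at `y`. -/
def Fy (F : Set (Y →ₗ[ℝ] ℝ)) (y : Y) : Set (Y →ₗ[ℝ] ℝ) := {φ ∈ F | φ y ≠ 0}

/-- `φ` is the least element of `S` with respect to `le`. -/
def IsLeastWrt (le : (Y →ₗ[ℝ] ℝ) → (Y →ₗ[ℝ] ℝ) → Prop) (S : Set (Y →ₗ[ℝ] ℝ))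
    (φ : Y →ₗ[ℝ] ℝ) : Prop :=
  φ ∈ S ∧ ∀ ψ ∈ S, le φ ψ

/-- A cortege of linear functions on `Y`: a family `F` of linear functions linearly ordered
by `le` such that every nonempty `F_y` has a least element `φ_y`, and every `φ ∈ F` is `φ_y`
for some `y`. -/
structure IsCortege (F : Set (Y →ₗ[ℝ] ℝ))
    (le : (Y →ₗ[ℝ] ℝ) → (Y →ₗ[ℝ] ℝ) → Prop) : Prop where
  refl : ∀ φ ∈ F, le φ φ
  antisymm : ∀ φ ∈ F, ∀ ψ ∈ F, le φ ψ → le ψ φ → φ = ψ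
  trans : ∀ φ ∈ F, ∀ ψ ∈ F, ∀ χ ∈ F, le φ ψ → le ψ χ → le φ χ
  total : ∀ φ ∈ F, ∀ ψ ∈ F, le φ ψ ∨ le ψ φ
  least_exists : ∀ y : Y, Fy F y = ∅ ∨ ∃ φ, IsLeastWrt le (Fy F y) φ
  surj : ∀ φ ∈ F, ∃ y : Y, IsLeastWrt le (Fy F y) φ

/-- A step-linear function: `u(y) = 0` if `F_y = ∅` and `u(y) = φ_y(y)` otherwise,
for some cortege `(F, le)`. -/
def IsStepLinear (u : Y → ℝ) : Prop :=
  ∃ (F : Set (Y →ₗ[ℝ] ℝ)) (le : (Y →ₗ[ℝ] ℝ) → (Y →ₗ[ℝ] ℝ) → Prop),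
    IsCortege F le ∧
      ∀ y : Y, (Fy F y = ∅ ∧ u y = 0) ∨ ∃ φ, IsLeastWrt le (Fy F y) φ ∧ u y = φ y

theorem rel_iff_sub {r : Y → Y → Prop} (h : IsCompatiblePartialPreference r) (a b : Y) :
    r a b ↔ r 0 (b - a) := by
  constructor
  · intro hr
    have := h.add_compat (-a) hr
    simpa [sub_eq_add_neg] using this
  · intro hr
    have := h.add_compat a hr
    simpa using this

theorem pos_add {r : Y → Y → Prop} (h : IsCompatiblePartialPreference r) {a b : Y}
    (ha : r 0 a) (hb : r 0 b) : r 0 (a + b) := by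
  have := h.add_compat b ha
  rw [zero_add] at this
  exact h.trans hb this

theorem pos_smul {r : Y → Y → Prop} (h : IsCompatiblePartialPreference r) {a : Y} {l : ℝ}
    (hl : 0 < l) (ha : r 0 a) : r 0 (l • a) := by
  have := h.smul_compat hl ha
  rwa [smul_zero] at this

theorem mem_comp_iff {r : Y → Y → Prop} (h : IsCompatiblePartialPreference r) {y : Y}
    (hy : r 0 y) (z : Y) : z ∈ componentOf r y ↔
      ∃ a b : ℝ, 0 < a ∧ 0 < b ∧ r 0 (z - a • y) ∧ r 0 (b • y - z) := by
  constructor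
  · rintro ⟨-, ⟨μ, hμ, h1⟩, ⟨ν, hν, h2⟩⟩
    refine ⟨ν, μ⁻¹, hν, inv_pos.2 hμ, (rel_iff_sub h _ _).1 h2, ?_⟩
    have := pos_smul h (inv_pos.2 hμ) ((rel_iff_sub h _ _).1 h1)
    rwa [smul_sub, inv_smul_smul₀ hμ.ne'] at this
  · rintro ⟨a, b, ha, hb, h1, h2⟩
    refine ⟨?_, ⟨b⁻¹, inv_pos.2 hb, ?_⟩, ⟨a, ha, (rel_iff_sub h _ _).2 h1⟩⟩
    · have := pos_add h h1 (pos_smul h ha hy)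
      rwa [sub_add_cancel] at this
    · rw [rel_iff_sub h]
      have := pos_smul h (inv_pos.2 hb) h2
      rwa [smul_sub, inv_smul_smul₀ hb.ne'] at this

/-- Every open component of the positive cone is a relatively algebraic open
convex cone. -/
theorem stmt_1 (r : Y → Y → Prop) (h : IsCompatiblePartialPreference r)
    (E : Set Y) (hE : IsOpenComponent r E) :
    IsConeSet E ∧ Convex ℝ E ∧ E = icr E := by
  obtain ⟨y₀, hy₀, rfl⟩ := hE
  have hy₀' : r 0 y₀ := hy₀
  have hcone : IsConeSet (componentOf r y₀) := by
    intro z hz l hl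
    rw [mem_comp_iff h hy₀'] at hz ⊢
    obtain ⟨a, b, ha, hb, h1, h2⟩ := hz
    refine ⟨l * a, l * b, by positivity, by positivity, ?_, ?_⟩
    · simpa [smul_sub, mul_smul] using pos_smul h hl h1
    · simpa [smul_sub, mul_smul] using pos_smul h hl h2
  have hconv : Convex ℝ (componentOf r y₀) := by
    rw [convex_iff_forall_pos]
    intro z hz w hw s t hs ht _
    rw [mem_comp_iff h hy₀'] at hz hw ⊢
    obtain ⟨a, b, ha, hb, h1, h2⟩ := hz
    obtain ⟨c, d, hc, hd, h3, h4⟩ := hw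
    refine ⟨s * a + t * c, s * b + t * d, by positivity, by positivity, ?_, ?_⟩
    · convert pos_add h (pos_smul h hs h1) (pos_smul h ht h3) using 1
      module
    · convert pos_add h (pos_smul h hs h2) (pos_smul h ht h4) using 1
      module
  refine ⟨hcone, hconv, Set.Subset.antisymm ?_ fun z hz => hz.1⟩
  intro z hz
  refine ⟨hz, fun w hw => ?_⟩
  obtain ⟨a, b, ha, hb, h1, h2⟩ := (mem_comp_iff h hy₀' z).1 hz
  obtain ⟨c, d, hc, hd, h3, h4⟩ := (mem_comp_iff h hy₀' w).1 hw
  refine ⟨min 1 (a / (2 * d)), by positivity, fun t ht1 ht2 => ?_⟩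
  rcases le_or_gt 0 t with ht | ht
  · have := hconv hz hw (a := 1 - t) (b := t)
      (by linarith [min_le_left 1 (a / (2 * d))]) ht (by ring)
    convert this using 1
    module
  · obtain ⟨s, rfl⟩ : ∃ s, t = -s := ⟨-t, by ring⟩
    have hs : 0 < s := by linarith
    have hsd : s * (2 * d) < a := by
      rw [← lt_div_iff₀ (by positivity)]
      linarith [min_le_right 1 (a / (2 * d))]
    rw [mem_comp_iff h hy₀']
    refine ⟨a / 2, (1 + s) * b + 1, by positivity, by positivity, ?_, ?_⟩
    · have hpos : 0 < (1 + s) * a - s * d - a / 2 := by nlinarith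
      convert pos_add h (pos_add h (pos_smul h (show 0 < 1 + s by linarith) h1)
        (pos_smul h hs h4)) (pos_smul h hpos hy₀') using 1
      module
    · have hpos : 0 < 1 + s * c := by positivity
      convert pos_add h (pos_add h (pos_smul h (show 0 < 1 + s by linarith) h2)
        (pos_smul h hs h3)) (pos_smul h hpos hy₀') using 1
      module
end

section
/- Let Y be a real vector space and ≺ a compatible partial preference on Y with positive cone P_≺. Then the set O(P_≺) of open components of P_≺, partially ordered by ⊴*, is an upper lattice: every two open components E₁, E₂ have a least upper bound E₁ ∨ E₂ in (O(P_≺), ⊴*), and moreover E_y ∨ E_z = E_{y+z} for all y, z ∈ P_≺, i.e. for all y, z ∈ P_≺ the open component E_{y+z} is the least upper bound of {E_y, E_z} with respect to ⊴*. -/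
open Pointwise

variable {Y : Type*} [AddCommGroup Y] [Module ℝ Y]

theorem maj_trans_aux {r : Y → Y → Prop} (h : IsCompatiblePartialPreference r) {y z w : Y}
    (h1 : maj r y z) (h2 : maj r z w) : maj r y w := by
  obtain ⟨μ, hμ, h1⟩ := h1
  obtain ⟨ν, hν, h2⟩ := h2
  refine ⟨ν * μ, by positivity, ?_⟩
  rw [mul_smul]
  exact h.trans (h.smul_compat hν h1) h2

theorem maj_refl_aux {r : Y → Y → Prop} (h : IsCompatiblePartialPreference r) {y : Y}
    (hy : r 0 y) : maj r y y := by
  refine ⟨1 / 2, by norm_num, ?_⟩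
  have h1 := h.add_compat ((1 / 2 : ℝ) • y)
    (h.smul_compat (show (0 : ℝ) < 1 / 2 by norm_num) hy)
  rw [smul_zero, zero_add, ← add_smul] at h1
  norm_num at h1 ⊢
  exact h1

theorem maj_left_aux {r : Y → Y → Prop} (h : IsCompatiblePartialPreference r) {y z : Y}
    (hz : r 0 z) : maj r y (y + z) := by
  refine ⟨1, one_pos, ?_⟩
  have h1 := h.add_compat y hz
  rw [zero_add, add_comm z y] at h1
  rwa [one_smul]

theorem maj_add_aux {r : Y → Y → Prop} (h : IsCompatiblePartialPreference r) {y z w : Y}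
    (h1 : maj r y w) (h2 : maj r z w) : maj r (y + z) w := by
  obtain ⟨μ, hμ, h1⟩ := h1
  obtain ⟨ν, hν, h2⟩ := h2
  refine ⟨ν / (μ + ν) * μ, by positivity, ?_⟩
  have a := h.add_compat ((μ / (μ + ν)) • (ν • z))
    (h.smul_compat (show 0 < ν / (μ + ν) by positivity) h1)
  have b := h.add_compat ((ν / (μ + ν)) • w)
    (h.smul_compat (show 0 < μ / (μ + ν) by positivity) h2)
  rw [add_comm] at b
  have c := h.trans a b
  have e1 : (μ / (μ + ν)) • w + (ν / (μ + ν)) • w = w := by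
    rw [← add_smul, ← add_div, div_self (by positivity), one_smul]
  have e2 : (ν / (μ + ν)) • (μ • y) + (μ / (μ + ν)) • (ν • z)
      = (ν / (μ + ν) * μ) • (y + z) := by
    rw [smul_smul, smul_smul, smul_add]
    congr 2
    ring
  rwa [e1, e2] at c

theorem posCone_add_aux {r : Y → Y → Prop} (h : IsCompatiblePartialPreference r) {y z : Y}
    (hy : y ∈ posCone r) (hz : z ∈ posCone r) : y + z ∈ posCone r := by
  have h1 := h.add_compat z hy
  rw [zero_add] at h1
  exact h.trans hz h1

theorem stmt_2_aux {r : Y → Y → Prop} (h : IsCompatiblePartialPreference r) :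
    ∀ y ∈ posCone r, ∀ z ∈ posCone r,
      compLE r (componentOf r y) (componentOf r (y + z)) ∧
      compLE r (componentOf r z) (componentOf r (y + z)) ∧
      ∀ E' : Set Y, IsOpenComponent r E' → compLE r (componentOf r y) E' →
        compLE r (componentOf r z) E' → compLE r (componentOf r (y + z)) E' := by
  intro y hy z hz
  refine ⟨?_, ?_, ?_⟩
  · intro a ha b hb
    exact maj_trans_aux h ha.2.1 (maj_trans_aux h (maj_left_aux h hz) hb.2.2)
  · intro a ha b hb
    refine maj_trans_aux h ha.2.1 (maj_trans_aux h ?_ hb.2.2)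
    rw [add_comm]
    exact maj_left_aux h hy
  · intro E' _ h1 h2 a ha b hb
    exact maj_trans_aux h ha.2.1 (maj_add_aux h
      (h1 y ⟨hy, maj_refl_aux h hy, maj_refl_aux h hy⟩ b hb)
      (h2 z ⟨hz, maj_refl_aux h hz, maj_refl_aux h hz⟩ b hb))

/-- `(O(P_≺), ⊴*)` is an upper lattice and `E_y ∨ E_z = E_{y+z}`. -/
theorem stmt_2 (r : Y → Y → Prop) (h : IsCompatiblePartialPreference r) :
    (∀ E₁ E₂ : Set Y, IsOpenComponent r E₁ → IsOpenComponent r E₂ →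
      ∃ E : Set Y, IsOpenComponent r E ∧ compLE r E₁ E ∧ compLE r E₂ E ∧
        ∀ E' : Set Y, IsOpenComponent r E' → compLE r E₁ E' → compLE r E₂ E' →
          compLE r E E') ∧
    ∀ y ∈ posCone r, ∀ z ∈ posCone r,
      compLE r (componentOf r y) (componentOf r (y + z)) ∧
      compLE r (componentOf r z) (componentOf r (y + z)) ∧
      ∀ E' : Set Y, IsOpenComponent r E' → compLE r (componentOf r y) E' →
        compLE r (componentOf r z) E' → compLE r (componentOf r (y + z)) E' := by
  refine ⟨?_, stmt_2_aux h⟩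
  rintro _ _ ⟨y, hy, rfl⟩ ⟨z, hz, rfl⟩
  exact ⟨componentOf r (y + z), ⟨y + z, posCone_add_aux h hy hz, rfl⟩, stmt_2_aux h y hy z hz⟩
end

section
/- Let Y be a real vector space and ≺ a compatible partial preference on Y with positive cone P_≺. Then for every open component E ∈ O(P_≺), with Lin(E) := E − E the linear hull of E, one has Lin(E) ∩ P_≺ = ⋃{Ẽ ∈ O(P_≺) | Ẽ ⊴* E}. -/
open Pointwise

variable {Y : Type*} [AddCommGroup Y] [Module ℝ Y]

theorem maj_trans' {r : Y → Y → Prop} (h : IsCompatiblePartialPreference r) {a b c : Y}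
    (hab : maj r a b) (hbc : maj r b c) : maj r a c := by
  obtain ⟨m, hm, h1⟩ := hab
  obtain ⟨n, hn, h2⟩ := hbc
  refine ⟨n * m, mul_pos hn hm, ?_⟩
  have h3 := h.smul_compat hn h1
  rw [smul_smul] at h3
  exact h.trans h3 h2

theorem maj_self {r : Y → Y → Prop} (h : IsCompatiblePartialPreference r) {a : Y}
    (ha : r 0 a) : maj r a a := by
  refine ⟨1 / 2, by norm_num, ?_⟩
  rw [rel_iff_sub h]
  have h3 := h.smul_compat (l := 1 / 2) (by norm_num) ha
  rw [smul_zero] at h3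
  convert h3 using 1
  module

/-- For every open component `E`,
`Lin(E) ∩ P_≺ = ⋃ {Ẽ ∈ O(P_≺) | Ẽ ⊴* E}`. -/
theorem stmt_3 (r : Y → Y → Prop) (h : IsCompatiblePartialPreference r)
    (E : Set Y) (hE : IsOpenComponent r E) :
    (E - E) ∩ posCone r = ⋃₀ {E' : Set Y | IsOpenComponent r E' ∧ compLE r E' E} := by
  obtain ⟨e, he, rfl⟩ := hE
  have he' : r 0 e := he
  ext x
  constructor
  · rintro ⟨⟨a, ⟨ha, hae, hea⟩, b, ⟨hb, -⟩, rfl⟩, hx⟩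
    have hx' : r 0 (a - b) := hx
    have hxa : maj r (a - b) a := by
      refine ⟨1, one_pos, ?_⟩
      rw [one_smul, rel_iff_sub h, sub_sub_cancel]
      exact hb
    have hs := maj_self h hx'
    refine ⟨componentOf r (a - b), ⟨⟨_, hx, rfl⟩, ?_⟩, hx, hs, hs⟩
    rintro z ⟨-, hz, -⟩ w ⟨-, -, hw⟩
    exact maj_trans' h hz (maj_trans' h hxa (maj_trans' h hae hw))
  · rintro ⟨E', ⟨⟨y, hy, rfl⟩, hle⟩, hx⟩
    have hxP : r 0 x := hx.1
    have hse := maj_self h he'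
    have heE : e ∈ componentOf r e := ⟨he, hse, hse⟩
    obtain ⟨m, hm, hme⟩ := hle x hx e heE
    have hex : r e (x + e) := by
      rw [rel_iff_sub h, add_sub_cancel_right]
      exact hxP
    refine ⟨⟨x + e, ⟨h.trans he' hex, ⟨m / (1 + m), by positivity, ?_⟩, 1, one_pos, ?_⟩,
      e, heE, add_sub_cancel_right x e⟩, hxP⟩
    · rw [rel_iff_sub h] at hme ⊢
      have h3 := h.smul_compat (l := 1 / (1 + m)) (by positivity) hme
      rw [smul_zero] at h3
      convert h3 using 1
      have hne : 1 + m ≠ 0 := by positivity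
      match_scalars <;> field_simp <;> ring
    · rwa [one_smul]
end

section
/- Let Y be a real vector space and ≺ a compatible weak preference on Y with positive cone P_≺. Then the majorization relation ⊴ on P_≺ is total: for all y, z ∈ P_≺, either y ⊴ z or z ⊴ y. -/
open Pointwise

variable {Y : Type*} [AddCommGroup Y] [Module ℝ Y]

/-- For a compatible weak preference, the majorization relation `⊴` on the
positive cone is total. -/
theorem stmt_7 (r : Y → Y → Prop) (h : IsCompatibleWeakPreference r) :
    ∀ y ∈ posCone r, ∀ z ∈ posCone r, maj r y z ∨ maj r z y := by
  intro y hy z _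
  by_contra hc
  simp only [maj, not_or, not_exists, not_and] at hc
  obtain ⟨h1, h2⟩ := hc
  have a1 : ¬ r y z := fun k => h1 1 one_pos (by simpa using k)
  have a2 : ¬ r z y := fun k => h2 1 one_pos (by simpa using k)
  have a3 : ¬ r z ((2 : ℝ) • y) := fun k => h2 (2⁻¹) (by norm_num) (by
    have := h.smul_compat (l := (2⁻¹ : ℝ)) (by norm_num) k
    simpa [smul_smul] using this)
  have a4 : ¬ r ((2 : ℝ) • y) z := h1 2 (by norm_num)
  apply (h.indiff_trans a1 a2 a3 a4).1
  have h0 : r 0 y := hy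
  have := h.add_compat y h0
  rwa [zero_add, ← two_smul ℝ y] at this
end

section
/- Let Y be a real vector space and ≺ a compatible weak preference on Y with positive cone P_≺. Then for all y, z ∈ P_≺, y ⊲ z implies y ≺ z. -/
open Pointwise

variable {Y : Type*} [AddCommGroup Y] [Module ℝ Y]

/-- For a compatible weak preference, `y ⊲ z` implies `y ≺ z` on the positive
cone. -/
theorem stmt_8 (r : Y → Y → Prop) (h : IsCompatibleWeakPreference r) :
    ∀ y ∈ posCone r, ∀ z ∈ posCone r, maj r y z → ¬ maj r z y → r y z := by
  intro y _ z hz _ hzy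
  by_contra hyz
  have hz0 : r 0 z := hz
  have hhalf : r ((1 / 2 : ℝ) • z) z := by
    have h1 := h.smul_compat (l := 1 / 2) (by norm_num) hz0
    have h2 := h.add_compat ((1 / 2 : ℝ) • z) h1
    rw [smul_zero, zero_add, ← add_smul] at h2
    norm_num at h2
    norm_num
    exact h2
  have a : ¬ r z y := fun hr => hzy ⟨1, one_pos, by rwa [one_smul]⟩
  have b : ¬ r ((1 / 2 : ℝ) • z) y := fun hr => hzy ⟨1 / 2, by norm_num, hr⟩
  have c : ¬ r y ((1 / 2 : ℝ) • z) := fun hr => hyz (h.trans hr hhalf)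
  exact (h.indiff_trans b c hyz a).1 hhalf
end

section
/- Let Y be a real vector space and ≺ a compatible weak preference on Y with positive cone P_≺. Then for every open component E ∈ O(P_≺) the inclusions L_≺ ⊆ L_E ⊆ Lin(E) hold, where L_E is the vector space associated with the convex cone E, L_≺ := L_{P_≺}, and Lin(E) := E − E. -/
open Pointwise

variable {Y : Type*} [AddCommGroup Y] [Module ℝ Y]

/-- For a compatible weak preference, `L_≺ ⊆ L_E ⊆ Lin(E)` for every open
component `E`. -/
theorem stmt_9 (r : Y → Y → Prop) (h : IsCompatibleWeakPreference r)
    (E : Set Y) (hE : IsOpenComponent r E) :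
    assocSubspace (posCone r) ⊆ assocSubspace E ∧ assocSubspace E ⊆ E - E := by
  obtain ⟨e, he, rfl⟩ := hE
  have sub : ∀ a b : Y, r a b ↔ b - a ∈ posCone r := by
    intro a b
    constructor
    · intro hab
      have := h.add_compat (-a) hab
      simpa [posCone, sub_eq_add_neg] using this
    · intro hab
      have := h.add_compat a hab
      simpa using this
  refine ⟨?_, ?_⟩
  · rintro k hk y ⟨hy, ⟨μ, hμ, h1⟩, ⟨ν, hν, h2⟩⟩ t
    refine ⟨hk y hy t, ⟨μ, hμ, ?_⟩, ⟨ν, hν, ?_⟩⟩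
    · rw [sub] at h1 ⊢
      have := hk _ h1 (-(μ * t))
      convert this using 1
      module
    · rw [sub] at h2 ⊢
      have := hk _ h2 t
      convert this using 1
      module
  · intro k hk
    have hm : maj r e e := by
      refine ⟨1 / 2, by norm_num, ?_⟩
      rw [sub]
      have : r ((1 / 2 : ℝ) • (0 : Y)) ((1 / 2 : ℝ) • e) := h.smul_compat (by norm_num) he
      rw [smul_zero] at this
      have h3 : e - (1 / 2 : ℝ) • e = (1 / 2 : ℝ) • e := by module
      rw [h3]
      exact this
    have hee : e ∈ componentOf r e := ⟨he, hm, hm⟩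
    have := hk e hee 1
    exact ⟨_, this, e, hee, by simp⟩
end

section
/- Let Y be a real vector space, ≺ a compatible weak preference on Y with positive cone P_≺, and let F_≺ = {φ_E | E ∈ O(P_≺)} be a family of nonzero linear functions φ_E : Y → ℝ indexed by the open components such that E = {y ∈ Lin(E) | φ_E(y) > 0} and L_E = {y ∈ Lin(E) | φ_E(y) = 0} for each E; order F_≺ by φ_E ⊴' φ_{Ẽ} ⟺ Ẽ ⊴* E. Then: for each y ∈ Y, the subfamily F_≺(y) := {φ ∈ F_≺ | φ(y) ≠ 0} is either empty or has a least element with respect to ⊴'; conversely, for each φ_E ∈ F_≺ there exists y ∈ Y such that φ_E is the least element of F_≺(y) with respect to ⊴'. -/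
open Pointwise

variable {Y : Type*} [AddCommGroup Y] [Module ℝ Y]

theorem aux_negtrans {r : Y → Y → Prop} (h : IsCompatibleWeakPreference r) {a c : Y} (b : Y)
    (hac : r a c) : r a b ∨ r b c := by
  by_contra hcon
  push Not at hcon
  obtain ⟨h1, h2⟩ := hcon
  by_cases h3 : r b a
  · exact h2 (h.trans h3 hac)
  by_cases h4 : r c b
  · exact h1 (h.trans hac h4)
  exact (h.indiff_trans h1 h3 h2 h4).1 hac

theorem aux_maj_trans {r : Y → Y → Prop} (h : IsCompatibleWeakPreference r) {a b c : Y}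
    (h1 : maj r a b) (h2 : maj r b c) : maj r a c := by
  obtain ⟨m, hm, h1⟩ := h1
  obtain ⟨n, hn, h2⟩ := h2
  refine ⟨n * m, mul_pos hn hm, ?_⟩
  have := h.smul_compat hn h1
  rw [smul_smul] at this
  exact h.trans this h2

theorem aux_self {r : Y → Y → Prop} (h : IsCompatibleWeakPreference r) {y : Y}
    (hy : r 0 y) {a b : ℝ} (hab : a < b) : r (a • y) (b • y) := by
  have h1 := h.smul_compat (sub_pos.2 hab) hy
  have h2 := h.add_compat (a • y) h1
  have e : (b - a) • y + a • y = b • y := by module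
  rw [e] at h2
  simpa using h2

theorem aux_maj_refl {r : Y → Y → Prop} (h : IsCompatibleWeakPreference r) {y : Y}
    (hy : r 0 y) : maj r y y := by
  refine ⟨1/2, by norm_num, ?_⟩
  simpa using aux_self h hy (show (1/2 : ℝ) < 1 by norm_num)

theorem aux_mem {r : Y → Y → Prop} (h : IsCompatibleWeakPreference r) {y : Y}
    (hy : r 0 y) : y ∈ componentOf r y :=
  ⟨hy, aux_maj_refl h hy, aux_maj_refl h hy⟩

theorem aux_assoc {r : Y → Y → Prop} (h : IsCompatibleWeakPreference r) {E : Set Y}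
    (hE : IsOpenComponent r E) {y : Y} (hy : ∀ z ∈ E, ∀ t : ℝ, r (t • y) z) :
    y ∈ assocSubspace E := by
  intro z hz t
  have a1 := h.smul_compat (show (0:ℝ) < 1/2 by norm_num) (hy z hz (2 * t))
  have a2 := h.smul_compat (show (0:ℝ) < 1/2 by norm_num) (hy z hz (-2 * t))
  have b1 := h.add_compat z a1
  have b2 := h.add_compat ((1/2 : ℝ) • z + t • y) a2
  have e1 : (1/2 : ℝ) • (2 * t) • y + z = z + t • y := by module
  have e2 : (1/2 : ℝ) • z + z = (3/2 : ℝ) • z := by module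
  have e3 : (1/2 : ℝ) • (-2 * t) • y + ((1/2 : ℝ) • z + t • y) = (1/2 : ℝ) • z := by module
  have e4 : (1/2 : ℝ) • z + ((1/2 : ℝ) • z + t • y) = z + t • y := by module
  rw [e1, e2] at b1
  rw [e3, e4] at b2
  obtain ⟨w, hw, rfl⟩ := hE
  obtain ⟨hz0, hzw, hwz⟩ := hz
  have hz0' : r 0 z := hz0
  refine ⟨?_, ?_, ?_⟩
  · have := aux_self h hz0' (show (0:ℝ) < 1/2 by norm_num)
    rw [zero_smul] at this
    exact h.trans this b2
  · refine aux_maj_trans h ⟨2/3, by norm_num, ?_⟩ hzw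
    have := h.smul_compat (show (0:ℝ) < 2/3 by norm_num) b1
    rwa [smul_smul (2/3 : ℝ) (3/2) z, show (2/3 * (3/2) : ℝ) = 1 by norm_num, one_smul] at this
  · exact aux_maj_trans h hwz ⟨1/2, by norm_num, b2⟩

theorem aux_compLE {r : Y → Y → Prop} (h : IsCompatibleWeakPreference r) {E : Set Y}
    (hE : IsOpenComponent r E) {y : Y} (hy : r 0 y) (hn : y ∉ assocSubspace E) :
    compLE r E (componentOf r y) := by
  intro y1 h1 y2 h2
  by_contra hcon
  apply hn
  apply aux_assoc h hE
  intro z hz t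
  have hz0 : r 0 z := by
    obtain ⟨w, hw, rfl⟩ := hE
    exact hz.1
  have hm : maj r y1 z := by
    obtain ⟨w, hw, rfl⟩ := hE
    exact aux_maj_trans h h1.2.1 hz.2.2
  rcases le_or_gt t 0 with ht | ht
  · rcases ht.eq_or_lt with rfl | ht
    · simpa using hz0
    · have := aux_self h hy ht
      rw [zero_smul] at this
      exact h.trans this hz0
  · have hlt : 1/2 * t⁻¹ < t⁻¹ := by
      have : 0 < t⁻¹ := inv_pos.2 ht
      linarith
    rcases aux_negtrans h y (aux_self h hz0 hlt) with h3 | h3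
    · exact absurd (aux_maj_trans h hm
        (aux_maj_trans h ⟨1/2 * t⁻¹, by positivity, h3⟩ h2.2.2)) hcon
    · have := h.smul_compat ht h3
      rwa [smul_smul, mul_inv_cancel₀ ht.ne', one_smul] at this

/-- For a family `{φ_E}` of nonzero linear functions representing the open
components (ordered by `φ_E ⊴' φ_Ẽ ⟺ Ẽ ⊴* E`): for each `y` the subfamily
`{φ_E | φ_E(y) ≠ 0}` is empty or has a least element w.r.t. `⊴'` (i.e. a greatest index
w.r.t. `⊴*`); conversely every `φ_E` is the least element of such a subfamily. -/
theorem stmt_13 (r : Y → Y → Prop) (h : IsCompatibleWeakPreference r)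
    (Φ : Set Y → (Y →ₗ[ℝ] ℝ))
    (hΦ : ∀ E : Set Y, IsOpenComponent r E → Φ E ≠ 0 ∧
      E = {y ∈ E - E | 0 < Φ E y} ∧ assocSubspace E = {y ∈ E - E | Φ E y = 0}) :
    (∀ y : Y,
      (∀ E : Set Y, IsOpenComponent r E → Φ E y = 0) ∨
      ∃ E : Set Y, IsOpenComponent r E ∧ Φ E y ≠ 0 ∧
        ∀ E' : Set Y, IsOpenComponent r E' → Φ E' y ≠ 0 → compLE r E' E) ∧
    ∀ E : Set Y, IsOpenComponent r E → ∃ y : Y, Φ E y ≠ 0 ∧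
      ∀ E' : Set Y, IsOpenComponent r E' → Φ E' y ≠ 0 → compLE r E' E := by
  have key : ∀ y : Y, r 0 y → ∀ E' : Set Y, IsOpenComponent r E' → Φ E' y ≠ 0 →
      compLE r E' (componentOf r y) := by
    intro y hy E' hE' hne
    apply aux_compLE h hE' hy
    rw [(hΦ E' hE').2.2]
    exact fun hh => hne hh.2
  have pos : ∀ y : Y, r 0 y → 0 < Φ (componentOf r y) y := by
    intro y hy
    have hm := aux_mem h hy
    rw [(hΦ _ ⟨y, hy, rfl⟩).2.1] at hm
    exact hm.2
  refine ⟨fun y => ?_, ?_⟩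
  · by_cases h1 : r 0 y
    · exact Or.inr ⟨_, ⟨y, h1, rfl⟩, (pos y h1).ne', key y h1⟩
    by_cases h2 : r 0 (-y)
    · refine Or.inr ⟨_, ⟨-y, h2, rfl⟩, ?_, fun E' hE' hne => key (-y) h2 E' hE' (by simpa using hne)⟩
      have := (pos (-y) h2).ne'
      simpa using this
    left
    intro E hE
    have hm : y ∈ assocSubspace E := by
      apply aux_assoc h hE
      intro z hz t
      have hz0 : r 0 z := by
        obtain ⟨w, hw, rfl⟩ := hE
        exact hz.1
      rcases aux_negtrans h (t • y) hz0 with h3 | h3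
      · exfalso
        rcases lt_trichotomy t 0 with ht | rfl | ht
        · apply h2
          have := h.smul_compat (inv_pos.2 (neg_pos.2 ht)) h3
          rw [smul_smul, smul_zero] at this
          have e : (-t)⁻¹ * t = -1 := by
            have := ht.ne
            field_simp
          rwa [e, neg_one_smul] at this
        · rw [zero_smul] at h3
          exact h.asymm h3 h3
        · apply h1
          have := h.smul_compat (inv_pos.2 ht) h3
          rwa [smul_smul, smul_zero, inv_mul_cancel₀ ht.ne', one_smul] at this
      · exact h3
    rw [(hΦ E hE).2.2] at hm
    exact hm.2
  · rintro E ⟨y, hy, rfl⟩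
    exact ⟨y, (pos y hy).ne', key y hy⟩
end

section
/- Let Y be a real vector space and let (F, ⊴_F) be a cortege of linear functions on Y. Then F is a linearly independent family in the vector space of linear functions from Y to ℝ: for every finite subfamily {φ₁, …, φ_k} of distinct elements of F and reals μ₁, …, μ_k, if μ₁φ₁ + ⋯ + μ_kφ_k = 0 then μ₁ = ⋯ = μ_k = 0. -/
open Pointwise

variable {Y : Type*} [AddCommGroup Y] [Module ℝ Y]

/-- A cortege of linear functions is a linearly independent family. -/
theorem stmt_14 (F : Set (Y →ₗ[ℝ] ℝ)) (le : (Y →ₗ[ℝ] ℝ) → (Y →ₗ[ℝ] ℝ) → Prop)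
    (hF : IsCortege F le) (k : ℕ) (φ : Fin k → (Y →ₗ[ℝ] ℝ))
    (hinj : Function.Injective φ) (hmem : ∀ i, φ i ∈ F) (μ : Fin k → ℝ)
    (hsum : ∑ i, μ i • φ i = (0 : Y →ₗ[ℝ] ℝ)) :
    ∀ i, μ i = 0 := by
  classical
  have hmax : ∀ s : Finset (Fin k), s.Nonempty → ∃ i ∈ s, ∀ j ∈ s, le (φ j) (φ i) := by
    intro s
    induction s using Finset.induction_on with
    | empty => intro h; exact absurd h (by simp)
    | insert a s ha ih =>
      intro _
      rcases s.eq_empty_or_nonempty with rfl | hs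
      · refine ⟨a, by simp, fun j hj => ?_⟩
        have hja : j = a := by simpa using hj
        rw [hja]
        exact hF.refl _ (hmem a)
      · obtain ⟨i, his, hi⟩ := ih hs
        rcases hF.total _ (hmem a) _ (hmem i) with h | h
        · refine ⟨i, Finset.mem_insert_of_mem his, fun j hj => ?_⟩
          rcases Finset.mem_insert.1 hj with rfl | hj
          · exact h
          · exact hi j hj
        · refine ⟨a, Finset.mem_insert_self _ _, fun j hj => ?_⟩
          rcases Finset.mem_insert.1 hj with rfl | hj
          · exact hF.refl _ (hmem _)
          · exact hF.trans _ (hmem j) _ (hmem i) _ (hmem a) (hi j hj) h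
  intro i₀
  by_contra h₀
  obtain ⟨i, hi, hle⟩ := hmax (Finset.univ.filter fun i => μ i ≠ 0) ⟨i₀, by simpa using h₀⟩
  have hi0 : μ i ≠ 0 := by simpa using hi
  obtain ⟨y, ⟨_, hy⟩, hleast⟩ := hF.surj _ (hmem i)
  have hs : ∑ j, μ j * φ j y = 0 := by
    have := congrArg (fun f : Y →ₗ[ℝ] ℝ => f y) hsum
    simpa using this
  rw [Finset.sum_eq_single i] at hs
  · exact mul_ne_zero hi0 hy hs
  · intro j _ hji
    by_contra hne
    have h1 : μ j ≠ 0 := left_ne_zero_of_mul hne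
    have h2 : φ j y ≠ 0 := right_ne_zero_of_mul hne
    exact hji (hinj (hF.antisymm _ (hmem j) _ (hmem i) (hle j (by simpa using h1))
      (hleast _ ⟨hmem j, h2⟩)))
  · simp
end

section
/- Let Y be a real vector space. Every step-linear function u : Y → ℝ is homogeneous, i.e. u(ty) = t·u(y) for all y ∈ Y and all t ∈ ℝ, and for any y, z ∈ Y the following implications hold: if u(z) = 0 then u(y + z) = u(y); and if u(y) > 0 and u(z) > 0 then u(y + z) > 0. -/
open Pointwise

variable {Y : Type*} [AddCommGroup Y] [Module ℝ Y]

/-- Every step-linear function is homogeneous and satisfies: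
`u(z) = 0 → u(y+z) = u(y)` and `u(y) > 0, u(z) > 0 → u(y+z) > 0`. -/
theorem stmt_15 (u : Y → ℝ) (hu : IsStepLinear u) :
    (∀ (y : Y) (t : ℝ), u (t • y) = t * u y) ∧
    (∀ y z : Y, u z = 0 → u (y + z) = u y) ∧
    (∀ y z : Y, 0 < u y → 0 < u z → 0 < u (y + z)) := by
  obtain ⟨F, le, hF, h⟩ := hu
  have key : ∀ y φ, IsLeastWrt le (Fy F y) φ → u y = φ y := by
    intro y φ hφ
    rcases h y with ⟨he, _⟩ | ⟨ψ, hψ, e⟩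
    · have := hφ.1
      rw [he] at this
      exact this.elim
    · rw [e, hF.antisymm ψ hψ.1.1 φ hφ.1.1 (hψ.2 φ hφ.1) (hφ.2 ψ hψ.1)]
  have key0 : ∀ y, Fy F y = ∅ → u y = 0 := by
    intro y he
    rcases h y with ⟨_, h0⟩ | ⟨ψ, hψ, _⟩
    · exact h0
    · have := hψ.1
      rw [he] at this
      exact this.elim
  have pos : ∀ (y z : Y) (φ ψ : Y →ₗ[ℝ] ℝ), IsLeastWrt le (Fy F y) φ →
      IsLeastWrt le (Fy F z) ψ → 0 < φ y → 0 < ψ z → le φ ψ → 0 < u (y + z) := by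
    intro y z φ ψ hφ hψ hy hz hle
    have hp : 0 < φ (y + z) := by
      rw [map_add]
      by_cases h0 : φ z = 0
      · rw [h0]; linarith
      · have : φ = ψ := hF.antisymm φ hφ.1.1 ψ hψ.1.1 hle (hψ.2 φ ⟨hφ.1.1, h0⟩)
        rw [← this] at hz
        linarith
    rw [key (y + z) φ ⟨⟨hφ.1.1, hp.ne'⟩, ?_⟩]
    · exact hp
    · rintro χ ⟨hχ, hne⟩
      by_cases h1 : χ y = 0
      · have h2 : χ z ≠ 0 := by
          intro h2
          exact hne (by rw [map_add, h1, h2, add_zero])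
        exact hF.trans φ hφ.1.1 ψ hψ.1.1 χ hχ hle (hψ.2 χ ⟨hχ, h2⟩)
      · exact hφ.2 χ ⟨hχ, h1⟩
  refine ⟨?_, ?_, ?_⟩
  · intro y t
    by_cases ht : t = 0
    · subst ht
      rw [zero_smul, zero_mul]
      apply key0
      ext φ
      simp [Fy]
    · have hS : Fy F (t • y) = Fy F y := by
        ext φ
        simp [Fy, ht]
      rcases h y with ⟨he, h0⟩ | ⟨φ, hφ, e⟩
      · rw [h0, mul_zero]
        exact key0 _ (hS.trans he)
      · rw [e, key (t • y) φ (by rw [hS]; exact hφ), map_smul, smul_eq_mul]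
  · intro y z hz
    have hz0 : ∀ χ ∈ F, χ z = 0 := by
      intro χ hχ
      by_contra hne
      rcases h z with ⟨he, _⟩ | ⟨φ, hφ, e⟩
      · have : χ ∈ Fy F z := ⟨hχ, hne⟩
        rw [he] at this
        exact this.elim
      · exact hφ.1.2 (e ▸ hz)
    have hS : Fy F (y + z) = Fy F y := by
      ext φ
      constructor
      · rintro ⟨a, b⟩
        exact ⟨a, by rwa [map_add, hz0 φ a, add_zero] at b⟩
      · rintro ⟨a, b⟩
        exact ⟨a, by rwa [map_add, hz0 φ a, add_zero]⟩
    rcases h y with ⟨he, h0⟩ | ⟨φ, hφ, e⟩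
    · rw [h0]
      exact key0 _ (hS.trans he)
    · rw [e, key (y + z) φ (by rw [hS]; exact hφ), map_add, hz0 φ hφ.1.1, add_zero]
  · intro y z hy hz
    rcases h y with ⟨_, h0⟩ | ⟨φ, hφ, e⟩
    · exact absurd h0 hy.ne'
    rcases h z with ⟨_, h0⟩ | ⟨ψ, hψ, e'⟩
    · exact absurd h0 hz.ne'
    rw [e] at hy
    rw [e'] at hz
    rcases hF.total φ hφ.1.1 ψ hψ.1.1 with hle | hle
    · exact pos y z φ ψ hφ hψ hy hz hle
    · rw [add_comm]
      exact pos z y ψ φ hψ hφ hz hy hle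
end

section
/- Let Y be a real vector space. A binary relation ≺ on Y is a compatible weak preference if and only if there exists a step-linear function u : Y → ℝ such that for all y, z ∈ Y: y ≺ z ⟺ u(z − y) > 0; and in that case also z − y ∈ L_≺ ⟺ u(z − y) = 0, where L_≺ is the vector space associated with the positive cone P_≺ of ≺. -/
open Pointwise

variable {Y : Type*} [AddCommGroup Y] [Module ℝ Y]

theorem aux_additive_mono {M : Type*} [AddCommGroup M] [LinearOrder M] [IsOrderedAddMonoid M]
    [Module ℝ M] [IsOrderedModule ℝ M] (f : M →+ ℝ) (hf : Monotone f) (t : ℝ) (x : M)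
    (hx : 0 ≤ x) : f (t • x) = t * f x := by
  have hq : ∀ q : ℚ, f ((q : ℝ) • x) = q * f x := by
    intro q
    have := map_ratCast_smul f ℝ ℝ q x
    simpa using this
  have h0 : 0 ≤ f x := by simpa using hf hx
  have hmono : ∀ a b : ℝ, a ≤ b → f (a • x) ≤ f (b • x) := fun a b h =>
    hf (smul_le_smul_of_nonneg_right h hx)
  rcases h0.eq_or_lt with h0 | h0
  · obtain ⟨q1, hq1⟩ := exists_rat_lt t
    obtain ⟨q2, hq2⟩ := exists_rat_gt t
    have h1 := hmono _ _ hq1.le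
    have h2 := hmono _ _ hq2.le
    rw [hq, ← h0] at h1 h2
    rw [← h0]
    linarith
  · apply le_antisymm
    · by_contra! h
      rw [← lt_div_iff₀ h0] at h
      obtain ⟨q, h1, h2⟩ := exists_rat_btwn h
      have := hmono _ _ h1.le
      rw [hq] at this
      rw [lt_div_iff₀ h0] at h2
      linarith
    · by_contra! h
      rw [← div_lt_iff₀ h0] at h
      obtain ⟨q, h1, h2⟩ := exists_rat_btwn h
      have := hmono _ _ h2.le
      rw [hq] at this
      rw [div_lt_iff₀ h0] at h1
      linarith

theorem aux_additive_mono' {M : Type*} [AddCommGroup M] [LinearOrder M] [IsOrderedAddMonoid M]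
    [Module ℝ M] [IsOrderedModule ℝ M] (f : M →+ ℝ) (hf : Monotone f) (t : ℝ) (x : M) :
    f (t • x) = t * f x := by
  rcases le_total 0 x with hx | hx
  · exact aux_additive_mono f hf t x hx
  · have := aux_additive_mono f hf t (-x) (by simpa using hx)
    simpa using this

theorem aux_seed (M : Type*) [AddCommGroup M] [LinearOrder M] [IsOrderedAddMonoid M]
    [Module ℝ M] [IsOrderedModule ℝ M] : Nonempty (HahnEmbedding.Seed ℝ M ℝ) := by
  obtain ⟨strata⟩ : Nonempty (HahnEmbedding.ArchimedeanStrata ℝ M) := inferInstance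
  choose f hf using fun c ↦ Archimedean.exists_orderAddMonoidHom_real_injective (strata.stratum c)
  refine ⟨strata, fun c ↦
    { toFun := f c
      map_add' := map_add (f c)
      map_smul' := fun t x => ?_ }, fun c ↦ ?_⟩
  · haveI : IsOrderedModule ℝ (strata.stratum c) :=
      IsOrderedModule.of_smul_nonneg fun t ht a ha => by
        have h : (0 : M) ≤ (a : M) := ha
        have h2 : (0 : M) ≤ t • (a : M) := smul_nonneg ht h
        exact h2
    exact aux_additive_mono' (f c : strata.stratum c →+ ℝ) (OrderHomClass.monotone (f c)) t x
  · apply Monotone.strictMono_of_injective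
    · exact OrderHomClass.monotone (f c)
    · exact hf c

theorem aux_hahn {Γ : Type*} [LinearOrder Γ] (g : Y →ₗ[ℝ] HahnSeries Γ ℝ)
    (hg : ∀ c : Γ, ∃ y, (g y).orderTop = c) : IsStepLinear (fun y => (g y).leadingCoeff) := by
  let φ : Γ → (Y →ₗ[ℝ] ℝ) := fun c =>
    { toFun := fun y => (g y).coeff c
      map_add' := by simp
      map_smul' := by simp }
  have hφ : ∀ c y, φ c y = (g y).coeff c := fun _ _ => rfl
  have hlt : ∀ (c : Γ) y, ((c : WithTop Γ) < (g y).orderTop) → φ c y = 0 := fun c y h =>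
    HahnSeries.coeff_eq_zero_of_lt_orderTop h
  have heq : ∀ (c : Γ) y, ((g y).orderTop = c) → (g y).leadingCoeff = φ c y ∧ φ c y ≠ 0 := by
    intro c y h
    have h0 : g y ≠ 0 := by
      rw [← HahnSeries.orderTop_ne_top, h]; simp
    have h1 : (g y).leadingCoeff = φ c y := by
      rw [HahnSeries.leadingCoeff_of_ne_zero h0, hφ]
      congr 1
      simp [h]
    refine ⟨h1, ?_⟩
    rw [← h1]
    exact HahnSeries.leadingCoeff_ne_zero.mpr h0
  have hinj : ∀ c d, c < d → φ c ≠ φ d := by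
    intro c d hcd h
    obtain ⟨y, hy⟩ := hg d
    apply (heq d y hy).2
    rw [← h]
    exact hlt c y (by rw [hy]; exact_mod_cast hcd)
  have hinj' : Function.Injective φ := by
    intro c d h
    rcases lt_trichotomy c d with h1 | h1 | h1
    · exact absurd h (hinj _ _ h1)
    · exact h1
    · exact absurd h.symm (hinj _ _ h1)
  let le : (Y →ₗ[ℝ] ℝ) → (Y →ₗ[ℝ] ℝ) → Prop := fun a b => ∃ c d, a = φ c ∧ b = φ d ∧ c ≤ d
  have hle : ∀ c d, le (φ c) (φ d) ↔ c ≤ d := by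
    intro c d
    constructor
    · rintro ⟨c', d', h1, h2, h3⟩
      rw [hinj' h1, hinj' h2]; exact h3
    · intro h; exact ⟨c, d, rfl, rfl, h⟩
  have hleast : ∀ (c : Γ) y, ((g y).orderTop = c) → IsLeastWrt le (Fy (Set.range φ) y) (φ c) := by
    intro c y h
    refine ⟨⟨⟨c, rfl⟩, (heq c y h).2⟩, ?_⟩
    rintro _ ⟨⟨d, rfl⟩, hd⟩
    rw [hle]
    by_contra! hdc
    exact hd (hlt d y (by rw [h]; exact_mod_cast hdc))
  have hzero : ∀ y, (g y).orderTop = ⊤ → Fy (Set.range φ) y = ∅ := by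
    intro y h
    ext ψ
    simp only [Set.mem_empty_iff_false, iff_false]
    rintro ⟨⟨d, rfl⟩, hd⟩
    exact hd (hlt d y (by rw [h]; exact WithTop.coe_lt_top d))
  refine ⟨Set.range φ, le, ⟨?_, ?_, ?_, ?_, ?_, ?_⟩, ?_⟩
  · rintro _ ⟨c, rfl⟩
    rw [hle]
  · rintro _ ⟨c, rfl⟩ _ ⟨d, rfl⟩ h1 h2
    rw [hle] at h1 h2
    rw [le_antisymm h1 h2]
  · rintro _ ⟨c, rfl⟩ _ ⟨d, rfl⟩ _ ⟨e, rfl⟩ h1 h2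
    rw [hle] at *
    exact h1.trans h2
  · rintro _ ⟨c, rfl⟩ _ ⟨d, rfl⟩
    rw [hle, hle]
    exact le_total c d
  · intro y
    rcases h : (g y).orderTop with _ | c
    · exact Or.inl (hzero y h)
    · exact Or.inr ⟨_, hleast c y h⟩
  · rintro _ ⟨c, rfl⟩
    obtain ⟨y, hy⟩ := hg c
    exact ⟨y, hleast c y hy⟩
  · intro y
    rcases h : (g y).orderTop with _ | c
    · refine Or.inl ⟨hzero y h, ?_⟩
      have : g y = 0 := HahnSeries.orderTop_eq_top.mp h
      simp [this]
    · exact Or.inr ⟨_, hleast c y h, (heq c y h).1⟩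

theorem aux_ordered {M : Type*} [AddCommGroup M] [LinearOrder M] [IsOrderedAddMonoid M]
    [Module ℝ M] [IsOrderedModule ℝ M] (p : Y →ₗ[ℝ] M) (hp : Function.Surjective p) :
    ∃ u : Y → ℝ, IsStepLinear u ∧ ∀ y, 0 < u y ↔ 0 < p y := by
  haveI := aux_seed M
  obtain ⟨f, hf, hf'⟩ := hahnEmbedding_isOrderedModule (K := ℝ) (M := M) (R := ℝ)
  let g : Y →ₗ[ℝ] HahnSeries (FiniteArchimedeanClass M) ℝ :=
    { toFun := fun y => ofLex (f (p y))
      map_add' := by simp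
      map_smul' := by simp }
  refine ⟨fun y => (g y).leadingCoeff, aux_hahn g ?_, ?_⟩
  · intro c
    obtain ⟨a, ha⟩ : ∃ a : M, ArchimedeanClass.mk a = c.1 := by
      induction h : c.1 using ArchimedeanClass.ind with | mk a => exact ⟨a, rfl⟩
    obtain ⟨y, rfl⟩ := hp a
    refine ⟨y, ?_⟩
    apply (FiniteArchimedeanClass.withTopOrderIso M).injective
    change (FiniteArchimedeanClass.withTopOrderIso M) (ofLex (f (p y))).orderTop = _
    rw [← hf', ha, FiniteArchimedeanClass.withTopOrderIso_apply_coe]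
  · intro y
    change 0 < (ofLex (f (p y))).leadingCoeff ↔ _
    rw [HahnSeries.leadingCoeff_pos_iff]
    constructor
    · intro h
      exact hf.lt_iff_lt.mp (by simpa using h)
    · intro h
      simpa using hf h

theorem aux_forward {r : Y → Y → Prop} (h : IsCompatibleWeakPreference r) :
    ∃ u : Y → ℝ, IsStepLinear u ∧ ∀ y z : Y, (r y z ↔ 0 < u (z - y)) := by
  have hr : ∀ y z, r y z ↔ r 0 (z - y) := by
    intro y z
    constructor
    · intro h'; simpa [sub_eq_add_neg] using h.add_compat (-y) h'
    · intro h'; simpa using h.add_compat y h'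
  have hr0 : ∀ y, r y 0 ↔ r 0 (-y) := fun y => by rw [hr y 0, zero_sub]
  have hirr : ¬ r 0 0 := fun h' => h.asymm h' h'
  have hadd : ∀ a b, r 0 a → r 0 b → r 0 (a + b) := fun a b ha hb =>
    h.trans hb (by simpa using h.add_compat b ha)
  have hsmul : ∀ (t : ℝ) a, 0 < t → r 0 a → r 0 (t • a) := fun t a ht ha => by
    simpa using h.smul_compat ht ha
  let N : Submodule ℝ Y :=
    { carrier := {y | ¬ r 0 y ∧ ¬ r 0 (-y)}
      zero_mem' := by simp [hirr]
      add_mem' := by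
        rintro a b ⟨ha, ha'⟩ ⟨hb, hb'⟩
        have := h.indiff_trans (y := 0) (z := a) (u := a + b) ha (by rwa [hr0])
          (by rw [hr]; simpa using hb) (by rw [hr]; simpa using hb')
        exact ⟨this.1, by rw [← hr0]; exact this.2⟩
      smul_mem' := by
        have key : ∀ (t : ℝ) (a : Y), 0 < t → ¬ r 0 a → ¬ r 0 (t • a) := by
          intro t a ht ha h'
          apply ha
          have := hsmul t⁻¹ _ (inv_pos.mpr ht) h'
          rwa [inv_smul_smul₀ ht.ne'] at this
        rintro t a ⟨ha, ha'⟩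
        rcases lt_trichotomy t 0 with ht | ht | ht
        · have ht' : 0 < -t := by linarith
          refine ⟨?_, ?_⟩
          · simpa using key _ _ ht' ha'
          · simpa using key _ _ ht' ha
        · simp [ht, hirr]
        · refine ⟨key _ _ ht ha, ?_⟩
          simpa using key _ _ ht ha' }
  have hN : ∀ y, y ∈ N ↔ ¬ r 0 y ∧ ¬ r 0 (-y) := fun _ => Iff.rfl
  have hshift : ∀ a n, n ∈ N → r 0 a → r 0 (a + n) := by
    intro a n hn ha
    by_contra h1
    by_cases h2 : r 0 (-(a + n))
    · apply ((hN n).mp hn).2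
      have := hadd _ _ ha h2
      simpa using this
    · have : a + n ∈ N := ⟨h1, h2⟩
      have h3 : a ∈ N := by simpa using N.sub_mem this hn
      exact h3.1 ha
  obtain ⟨W, hW⟩ := Submodule.exists_isCompl N
  have hWN : ∀ a ∈ W, a ∈ N → a = 0 := fun a h1 h2 =>
    (Submodule.disjoint_def.mp hW.disjoint) a h2 h1
  classical
  letI : LinearOrder W :=
    { le := fun a b => a = b ∨ r (a : Y) b
      lt := fun a b => r (a : Y) b
      le_refl := fun a => Or.inl rfl
      le_trans := by
        rintro a b c (rfl | h1) (rfl | h2)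
        · exact Or.inl rfl
        · exact Or.inr h2
        · exact Or.inr h1
        · exact Or.inr (h.trans h1 h2)
      lt_iff_le_not_ge := by
        intro a b
        constructor
        · intro h1
          refine ⟨Or.inr h1, ?_⟩
          rintro (rfl | h2)
          · exact h.asymm h1 h1
          · exact h.asymm h1 h2
        · rintro ⟨rfl | h1, h2⟩
          · exact absurd (Or.inl rfl) h2
          · exact h1
      le_antisymm := by
        rintro a b (rfl | h1) (h2 | h2)
        · rfl
        · rfl
        · exact h2.symm
        · exact absurd h2 (h.asymm h1)
      le_total := by
        intro a b
        by_cases h1 : r (a : Y) b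
        · exact Or.inl (Or.inr h1)
        by_cases h2 : r (b : Y) a
        · exact Or.inr (Or.inr h2)
        left; left
        have : (b : Y) - a ∈ N := by
          rw [hN, ← hr, neg_sub, ← hr]
          exact ⟨h1, h2⟩
        have := hWN _ (W.sub_mem b.2 a.2) this
        exact Subtype.ext (sub_eq_zero.mp this).symm
      toDecidableLE := Classical.decRel _ }
  have hlt : ∀ a b : W, a < b ↔ r (a : Y) b := fun _ _ => Iff.rfl
  have hle : ∀ a b : W, a ≤ b ↔ a = b ∨ r (a : Y) b := fun _ _ => Iff.rfl
  have hadd_le : ∀ a b : W, a ≤ b → ∀ c : W, a + c ≤ b + c := by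
    intro a b hab c
    rw [hle] at *
    rcases hab with rfl | hab
    · exact Or.inl rfl
    · right
      simpa using h.add_compat (c : Y) hab
  haveI : IsOrderedAddMonoid W := { add_le_add_left := hadd_le }
  haveI : IsOrderedModule ℝ W := by
    refine IsOrderedModule.of_smul_nonneg ?_
    intro t ht a ha
    rcases ht.eq_or_lt with rfl | ht
    · simp
    rw [hle] at *
    rcases ha with rfl | ha
    · simp
    · right
      simpa using hsmul t a ht (by simpa using ha)
  let p : Y →ₗ[ℝ] W := W.projectionOnto N hW.symm
  have hp : ∀ w : W, p w = w := fun w => Submodule.projectionOnto_apply_left hW.symm w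
  have hpN : ∀ y, y - p y ∈ N := by
    intro y
    rw [← Submodule.ker_projectionOnto hW.symm, LinearMap.mem_ker]
    change p (y - p y) = 0
    rw [map_sub, hp, sub_self]
  obtain ⟨u, hu, hu'⟩ := aux_ordered p (fun w => ⟨w, hp w⟩)
  refine ⟨u, hu, fun y z => ?_⟩
  rw [hu', hr, hlt]
  generalize z - y = a
  constructor
  · intro ha
    have := hshift a _ (N.neg_mem (hpN a)) ha
    simpa using this
  · intro ha
    have := hshift _ _ (hpN a) (by simpa using ha)
    simpa using this

/-- Algebraic properties of step-linear functions. -/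
theorem aux_step {u : Y → ℝ} (hu : IsStepLinear u) :
    (∀ (t : ℝ) y, u (t • y) = t * u y) ∧ (∀ y h, u h = 0 → u (y + h) = u y) ∧
      (∀ y z, 0 < u y → 0 < u z → 0 < u (y + z)) := by
  obtain ⟨F, le, hF, h⟩ := hu
  have hval : ∀ y φ, IsLeastWrt le (Fy F y) φ → u y = φ y := by
    intro y φ hφ
    rcases h y with ⟨h1, _⟩ | ⟨ψ, hψ, h2⟩
    · have := hφ.1
      rw [h1] at this
      exact this.elim
    · rw [h2, hF.antisymm ψ hψ.1.1 φ hφ.1.1 (hψ.2 _ hφ.1) (hφ.2 _ hψ.1)]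
  have hemp : ∀ y, Fy F y = ∅ → u y = 0 := by
    intro y hy
    rcases h y with ⟨_, h1⟩ | ⟨ψ, hψ, _⟩
    · exact h1
    · have := hψ.1
      rw [hy] at this
      exact this.elim
  have hzero : ∀ y, u y = 0 → ∀ φ ∈ F, φ y = 0 := by
    intro y hy φ hφ
    by_contra hne
    rcases h y with ⟨h1, _⟩ | ⟨ψ, hψ, h2⟩
    · have : φ ∈ Fy F y := ⟨hφ, hne⟩
      rw [h1] at this
      exact this.elim
    · exact hψ.1.2 (by rw [← h2, hy])
  refine ⟨?_, ?_, ?_⟩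
  · intro t y
    by_cases ht : t = 0
    · subst ht
      rw [zero_smul, zero_mul]
      apply hemp
      ext φ; simp [Fy]
    have hFy : Fy F (t • y) = Fy F y := by
      ext φ; simp [Fy, ht]
    rcases h y with ⟨h1, h2⟩ | ⟨φ, hφ, h2⟩
    · rw [h2, mul_zero]; exact hemp _ (by rw [hFy, h1])
    · rw [hval (t • y) φ (by rwa [hFy]), h2]; simp
  · intro y k hk
    have hk' := hzero k hk
    have hFy : Fy F (y + k) = Fy F y := by
      ext φ
      simp only [Fy, Set.mem_setOf_eq, map_add]
      constructor
      · rintro ⟨a, b⟩; rw [hk' φ a, add_zero] at b; exact ⟨a, b⟩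
      · rintro ⟨a, b⟩; refine ⟨a, ?_⟩; rwa [hk' φ a, add_zero]
    rcases h y with ⟨h1, h2⟩ | ⟨φ, hφ, h2⟩
    · rw [h2]; exact hemp _ (by rw [hFy, h1])
    · rw [hval (y + k) φ (by rwa [hFy]), h2, map_add, hk' φ hφ.1.1, add_zero]
  · have key : ∀ y z φ ψ, IsLeastWrt le (Fy F y) φ → IsLeastWrt le (Fy F z) ψ → 0 < φ y →
        0 < ψ z → le φ ψ → 0 < u (y + z) := by
      intro y z φ ψ hφ hψ h1 h2 hle
      have hpos : 0 < φ (y + z) := by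
        rw [map_add]
        by_cases h3 : φ z = 0
        · rw [h3, add_zero]; exact h1
        · have : φ = ψ := hF.antisymm _ hφ.1.1 _ hψ.1.1 hle (hψ.2 _ ⟨hφ.1.1, h3⟩)
          subst this
          linarith
      rw [hval (y + z) φ]
      · exact hpos
      · refine ⟨⟨hφ.1.1, hpos.ne'⟩, ?_⟩
        rintro χ ⟨h3, h4⟩
        by_cases h5 : χ y = 0
        · have h6 : χ z ≠ 0 := by
            intro h6; exact h4 (by rw [map_add, h5, h6, add_zero])
          exact hF.trans _ hφ.1.1 _ hψ.1.1 _ h3 hle (hψ.2 _ ⟨h3, h6⟩)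
        · exact hφ.2 _ ⟨h3, h5⟩
    intro y z hy hz
    rcases h y with ⟨_, h1⟩ | ⟨φ, hφ, h1⟩
    · linarith
    rcases h z with ⟨_, h2⟩ | ⟨ψ, hψ, h2⟩
    · linarith
    rcases hF.total _ hφ.1.1 _ hψ.1.1 with h3 | h3
    · exact key y z φ ψ hφ hψ (h1 ▸ hy) (h2 ▸ hz) h3
    · rw [add_comm]; exact key z y ψ φ hψ hφ (h2 ▸ hz) (h1 ▸ hy) h3

/-- `≺` is a compatible weak preference iff some step-linear `u` represents
it via `y ≺ z ⟺ u(z−y) > 0`; and in that case, for any such `u`, also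
`z − y ∈ L_≺ ⟺ u(z−y) = 0`. -/
theorem stmt_16 (r : Y → Y → Prop) :
    (IsCompatibleWeakPreference r ↔
      ∃ u : Y → ℝ, IsStepLinear u ∧ ∀ y z : Y, (r y z ↔ 0 < u (z - y))) ∧
    (∀ u : Y → ℝ, IsStepLinear u → (∀ y z : Y, (r y z ↔ 0 < u (z - y))) →
      ∀ y z : Y, (z - y ∈ assocSubspace (posCone r) ↔ u (z - y) = 0)) := by
  refine ⟨⟨aux_forward, ?_⟩, ?_⟩
  · rintro ⟨u, hu, h⟩
    obtain ⟨h1, h2, h3⟩ := aux_step hu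
    have hneg : ∀ y, u (-y) = - u y := fun y => by simpa using h1 (-1) y
    have hind : ∀ y z, ¬ r y z → ¬ r z y → u (z - y) = 0 := by
      intro y z a b
      rw [h] at a b
      rw [← neg_sub, hneg] at b
      linarith
    refine ⟨⟨?_, ?_, ?_, ?_⟩, ?_⟩
    · intro y z l hl hyz
      rw [h] at *
      rw [← smul_sub, h1]
      exact mul_pos hl hyz
    · intro y z w hyz
      rw [h] at *
      simpa using hyz
    · intro y z hyz hzy
      rw [h] at *
      rw [← neg_sub, hneg] at hzy
      linarith
    · intro y z w a b
      rw [h] at *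
      have := h3 _ _ b a
      simpa using this
    · intro y z w a b c d
      have e1 := hind _ _ a b
      have e2 := hind _ _ c d
      have e3 := h2 (w - z) (z - y) e1
      rw [e2, sub_add_sub_cancel] at e3
      rw [h, h, ← neg_sub w y, hneg, e3]
      simp
  · intro u hu h y z
    obtain ⟨h1, h2, h3⟩ := aux_step hu
    have hneg : ∀ y, u (-y) = - u y := fun y => by simpa using h1 (-1) y
    have hP : ∀ a, a ∈ posCone r ↔ 0 < u a := by
      intro a
      change r 0 a ↔ _
      rw [h, sub_zero]
    generalize z - y = k
    constructor
    · intro hk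
      rcases lt_trichotomy (u k) 0 with a | a | a
      · have := hk (-k) (by rw [hP, hneg]; linarith) 2
        rw [hP, show -k + (2 : ℝ) • k = k by module] at this
        linarith
      · exact a
      · have := hk k (by rwa [hP]) (-2)
        rw [hP, show k + (-2 : ℝ) • k = -k by module, hneg] at this
        linarith
    · intro hk a ha t
      rw [hP] at *
      rw [h2 _ _ (by rw [h1, hk, mul_zero])]
      exact ha
end

section
/- Let Y be a real vector space. Every compatible partial preference ≺ on Y can be regularly extended to a compatible weak preference: there exists a compatible weak preference ≺' on Y such that P_≺ ⊆ P_{≺'} and L_≺ ⊆ L_{≺'} (equivalently, y ≺ z implies y ≺' z, and z − y ∈ L_≺ implies z − y ∈ L_{≺'}). -/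
open Pointwise

variable {Y : Type*} [AddCommGroup Y] [Module ℝ Y]

/-- Convex cones not containing `0` and invariant under translations by `L`. -/
structure GoodCone (L Q : Set Y) : Prop where
  zero : (0 : Y) ∉ Q
  add : ∀ a ∈ Q, ∀ b ∈ Q, a + b ∈ Q
  smul : ∀ a ∈ Q, ∀ l : ℝ, 0 < l → l • a ∈ Q
  addL : ∀ a ∈ Q, ∀ b ∈ L, a + b ∈ Q

theorem goodCone_extend {L Q : Set Y} (h0 : (0 : Y) ∈ L)
    (hadd : ∀ a ∈ L, ∀ b ∈ L, a + b ∈ L) (hsm : ∀ a ∈ L, ∀ t : ℝ, t • a ∈ L)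
    (hQ : GoodCone L Q) {y : Y} (hy : -y ∉ Q) (hyL : y ∉ L) :
    GoodCone L {z | ∃ (a : Y) (t : ℝ), ((a ∈ Q ∧ 0 ≤ t) ∨ (a ∈ L ∧ 0 < t)) ∧ z = a + t • y} := by
  refine ⟨?_, ?_, ?_, ?_⟩
  · rintro ⟨a, t, h, he⟩
    have ha : a = -(t • y) := eq_neg_of_add_eq_zero_left he.symm
    have key : 0 < t → t⁻¹ • a = -y := fun ht => by
      rw [ha, smul_neg, smul_smul, inv_mul_cancel₀ ht.ne', one_smul]
    rcases h with ⟨haQ, ht⟩ | ⟨haL, ht⟩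
    · rcases ht.eq_or_lt with rfl | ht
      · simp at ha
        exact hQ.zero (ha ▸ haQ)
      · exact hy (key ht ▸ hQ.smul a haQ _ (inv_pos.2 ht))
    · apply hyL
      have := hsm _ (hsm a haL t⁻¹) (-1)
      rw [key ht] at this
      simpa using this
  · rintro _ ⟨a, t, h, rfl⟩ _ ⟨b, s, h', rfl⟩
    refine ⟨a + b, t + s, ?_, by module⟩
    rcases h with ⟨ha, ht⟩ | ⟨ha, ht⟩ <;> rcases h' with ⟨hb, hs⟩ | ⟨hb, hs⟩
    · exact Or.inl ⟨hQ.add a ha b hb, by positivity⟩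
    · exact Or.inl ⟨hQ.addL a ha b hb, by positivity⟩
    · exact Or.inl ⟨add_comm b a ▸ hQ.addL b hb a ha, by positivity⟩
    · exact Or.inr ⟨hadd a ha b hb, by positivity⟩
  · rintro _ ⟨a, t, h, rfl⟩ l hl
    refine ⟨l • a, l * t, ?_, by module⟩
    rcases h with ⟨ha, ht⟩ | ⟨ha, ht⟩
    · exact Or.inl ⟨hQ.smul a ha l hl, by positivity⟩
    · exact Or.inr ⟨hsm a ha l, by positivity⟩
  · rintro _ ⟨a, t, h, rfl⟩ b hb
    refine ⟨a + b, t, ?_, by module⟩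
    rcases h with ⟨ha, ht⟩ | ⟨ha, ht⟩
    · exact Or.inl ⟨hQ.addL a ha b hb, ht⟩
    · exact Or.inr ⟨hadd a ha b hb, ht⟩

/-- Every compatible partial preference can be regularly extended to a
compatible weak preference: `P_≺ ⊆ P_≺'` and `L_≺ ⊆ L_≺'`. -/
theorem stmt_18 (r : Y → Y → Prop) (h : IsCompatiblePartialPreference r) :
    ∃ r' : Y → Y → Prop, IsCompatibleWeakPreference r' ∧
      posCone r ⊆ posCone r' ∧
      assocSubspace (posCone r) ⊆ assocSubspace (posCone r') := by
  set L := assocSubspace (posCone r) with hL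
  have h0 : (0 : Y) ∈ L := by
    intro y hy t
    simpa using hy
  have hadd : ∀ a ∈ L, ∀ b ∈ L, a + b ∈ L := by
    intro a ha b hb y hy t
    have := hb _ (ha y hy t) t
    rwa [add_assoc, ← smul_add] at this
  have hsm : ∀ a ∈ L, ∀ t : ℝ, t • a ∈ L := by
    intro a ha t y hy s
    rw [smul_smul]
    exact ha y hy _
  have hP : GoodCone L (posCone r) := by
    refine ⟨fun h0 => h.asymm h0 h0, ?_, ?_, ?_⟩
    · intro a ha b hb
      have h1 : r (0 + b) (a + b) := h.add_compat b ha
      rw [zero_add] at h1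
      exact h.trans hb h1
    · intro a ha l hl
      have h1 := h.smul_compat hl ha
      rw [smul_zero] at h1
      exact h1
    · intro a ha b hb
      simpa using hb a ha 1
  obtain ⟨Q, hPQ, hmax⟩ := zorn_subset_nonempty {Q : Set Y | GoodCone L Q} (by
    intro c hc hch hne
    refine ⟨⋃₀ c, ?_, fun s hs => Set.subset_sUnion_of_mem hs⟩
    refine ⟨?_, ?_, ?_, ?_⟩
    · rintro ⟨s, hs, h0s⟩
      exact (hc hs).zero h0s
    · rintro a ⟨s, hs, ha⟩ b ⟨s', hs', hb⟩
      rcases hch.total hs hs' with hss | hss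
      · exact ⟨s', hs', (hc hs').add a (hss ha) b hb⟩
      · exact ⟨s, hs, (hc hs).add a ha b (hss hb)⟩
    · rintro a ⟨s, hs, ha⟩ l hl
      exact ⟨s, hs, (hc hs).smul a ha l hl⟩
    · rintro a ⟨s, hs, ha⟩ b hb
      exact ⟨s, hs, (hc hs).addL a ha b hb⟩) _ hP
  have hQ : GoodCone L Q := hmax.prop
  have hN : ∀ y, y ∉ Q → -y ∉ Q → y ∈ L := by
    intro y hy hy'
    by_contra hyL
    have hG := goodCone_extend h0 hadd hsm hQ hy' hyL
    apply hy
    refine hmax.le_of_ge hG ?_ ?_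
    · intro a ha
      exact ⟨a, 0, Or.inl ⟨ha, le_rfl⟩, by simp⟩
    · exact ⟨0, 1, Or.inr ⟨h0, one_pos⟩, by simp⟩
  have hLQ : ∀ a ∈ L, a ∉ Q := by
    intro a ha haQ
    have := hQ.addL a haQ _ (hsm a ha (-1))
    simp at this
    exact hQ.zero this
  have hLn : ∀ a ∈ L, -a ∈ L := fun a ha => by simpa using hsm a ha (-1)
  refine ⟨fun x y => y - x ∈ Q, ⟨⟨?_, ?_, ?_, ?_⟩, ?_⟩, ?_, ?_⟩
  · intro x y l hl hxy
    rw [← smul_sub]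
    exact hQ.smul _ hxy l hl
  · intro x y z hxy
    simpa using hxy
  · intro x y hxy hyx
    have := hQ.add _ hxy _ hyx
    simp at this
    exact hQ.zero this
  · intro x y z hxy hyz
    have := hQ.add _ hyz _ hxy
    simpa using this
  · intro y z u h1 h2 h3 h4
    have a1 := hN _ h1 (by simpa using h2)
    have a2 := hN _ h3 (by simpa using h4)
    have a3 := hadd _ a2 _ a1
    rw [sub_add_sub_cancel] at a3
    have a4 := hLn _ a3
    rw [neg_sub] at a4
    exact ⟨hLQ _ a3, hLQ _ a4⟩
  · intro y hy
    simpa [posCone] using hPQ hy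
  · intro a ha y hy t
    have hy' : y ∈ Q := by simpa [posCone] using hy
    simpa [posCone] using hQ.addL y hy' _ (hsm a ha t)
end
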